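/- Let M be a symmetric n×n rational matrix and let B be an n×k rational matrix (k ≥ 1) with nonnegative entries such that every entry of M − B * Bᵀ is nonnegative, and suppose the columns of B are weakly decreasing in the lexicographic order on Fin n → ℚ (column j+1 ≤lex column j for all j). Let w be the last column of B and let B₀ be the n×(k−1) matrix of the remaining columns. Then: (i) every entry of M − B₀ * B₀ᵀ is nonnegative, so B₀ is again such a matrix with weakly decreasing columns; (ii) w ≤ u in the lexicographic order for every column u of B₀; and (iii) w i * w j ≤ (M − B₀ * B₀ᵀ)_{i j} for all i, j. Hence every such B with k columns is obtained by appending a column satisfying (ii) and (iii) to such a matrix with k−1 columns. -/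

import Mathlib

/-!
Deleting the last column `w` of `B` adds the rank-one matrix `w wᵀ` to the residual `M - B Bᵀ`.
So the old residual is entrywise nonnegative exactly when `w wᵀ` is entrywise at most the new one,
and then the new one is nonnegative because `w` is.
-/

open Matrix

variable {m R : Type*}

theorem mul_eq_submatrix_castSucc_mul_add_vecMulVec_last {p : Type*} {k : ℕ}
    [NonUnitalNonAssocSemiring R] (A : Matrix m (Fin (k + 1)) R) (B : Matrix (Fin (k + 1)) p R) :
    A * B = A.submatrix id Fin.castSucc * B.submatrix Fin.castSucc id +
      vecMulVec (A.col (Fin.last k)) (B.row (Fin.last k)) := by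
  ext i j
  simp [mul_apply, vecMulVec_apply, Fin.sum_univ_castSucc]

theorem sub_mul_transpose_apply_nonneg_iff_last_mul_last_le {k : ℕ} [NonUnitalNonAssocRing R]
    [PartialOrder R] [IsOrderedAddMonoid R] {M : Matrix m m R} {B : Matrix m (Fin (k + 1)) R}
    {i j : m} :
    0 ≤ (M - B * Bᵀ) i j ↔
      B i (Fin.last k) * B j (Fin.last k) ≤
        (M - B.submatrix id Fin.castSucc * (B.submatrix id Fin.castSucc)ᵀ) i j := by
  rw [mul_eq_submatrix_castSucc_mul_add_vecMulVec_last B, ← sub_sub, sub_apply _ (vecMulVec _ _),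
    sub_nonneg, transpose_submatrix]
  rfl

/-- A partial algebraic decomposition of `M` in reverse lexicographic order. Nonnegativity of the
residual `M - B * Bᵀ` is entrywise, not positive semidefiniteness. -/
structure IsRevLexPartialDecomposition {ι : Type*} [Fintype ι] [Preorder ι] [LinearOrder m]
    [NonUnitalNonAssocRing R] [PartialOrder R] (M : Matrix m m R) (B : Matrix m ι R) : Prop where
  nonneg : ∀ i j, 0 ≤ B i j
  residual_nonneg : ∀ i j, 0 ≤ (M - B * Bᵀ) i j
  antitone_col : Antitone fun j => toLex (B.col j)

namespace IsRevLexPartialDecomposition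

variable {k : ℕ} [LinearOrder m] [NonUnitalNonAssocRing R] [PartialOrder R]
  {M : Matrix m m R} {B : Matrix m (Fin (k + 1)) R}

theorem col_last_le (h : IsRevLexPartialDecomposition M B) (j : Fin (k + 1)) :
    toLex (B.col (Fin.last k)) ≤ toLex (B.col j) :=
  h.antitone_col j.le_last

variable [IsOrderedAddMonoid R]

theorem last_mul_last_le (h : IsRevLexPartialDecomposition M B) (i j : m) :
    B i (Fin.last k) * B j (Fin.last k) ≤
      (M - B.submatrix id Fin.castSucc * (B.submatrix id Fin.castSucc)ᵀ) i j :=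
  sub_mul_transpose_apply_nonneg_iff_last_mul_last_le.1 (h.residual_nonneg i j)

theorem submatrix_castSucc [PosMulMono R] (h : IsRevLexPartialDecomposition M B) :
    IsRevLexPartialDecomposition M (B.submatrix id Fin.castSucc) where
  nonneg i j := h.nonneg i j.castSucc
  residual_nonneg i j := (mul_nonneg (h.nonneg i _) (h.nonneg j _)).trans (h.last_mul_last_le i j)
  antitone_col := h.antitone_col.comp_monotone Fin.strictMono_castSucc.monotone

end IsRevLexPartialDecomposition

theorem partial_decomposition_from_smaller_general {k : ℕ} [LinearOrder m]
    [NonUnitalNonAssocRing R] [PartialOrder R] [IsOrderedAddMonoid R] [PosMulMono R]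
    {M : Matrix m m R} {B : Matrix m (Fin (k + 1)) R} (h : IsRevLexPartialDecomposition M B) :
    IsRevLexPartialDecomposition M (B.submatrix id Fin.castSucc) ∧
      (∀ j, toLex (B.col (Fin.last k)) ≤ toLex ((B.submatrix id Fin.castSucc).col j)) ∧
      ∀ i j, B i (Fin.last k) * B j (Fin.last k) ≤
        (M - B.submatrix id Fin.castSucc * (B.submatrix id Fin.castSucc)ᵀ) i j :=
  ⟨h.submatrix_castSucc, fun j => h.col_last_le j.castSucc, h.last_mul_last_le⟩

theorem partial_decomposition_from_smaller {n k : ℕ} (M : Matrix (Fin n) (Fin n) ℚ)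
    (hsym : M.IsSymm) (B : Matrix (Fin n) (Fin (k + 1)) ℚ)
    (hB : ∀ i j, 0 ≤ B i j)
    (hMB : ∀ i j, 0 ≤ (M - B * Bᵀ) i j)
    (hlex : ∀ j : Fin k, toLex (fun i => B i j.succ) ≤ toLex (fun i => B i j.castSucc)) :
    -- write `w` for the last column of `B` and `B₀` for the remaining columns
    (∀ i j, 0 ≤ (M - (B.submatrix id Fin.castSucc) * (B.submatrix id Fin.castSucc)ᵀ) i j) ∧
    (∀ i j, 0 ≤ B.submatrix id Fin.castSucc i j) ∧
    (∀ j : Fin (k - 1) , toLex (fun i => B.submatrix id Fin.castSucc i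
        ⟨j + 1, by omega⟩) ≤ toLex (fun i => B.submatrix id Fin.castSucc i ⟨j, by omega⟩)) ∧
    (∀ j : Fin k, toLex (fun i => B i (Fin.last k)) ≤ toLex (fun i => B.submatrix id Fin.castSucc i j)) ∧
    (∀ i j, B i (Fin.last k) * B j (Fin.last k) ≤
      (M - (B.submatrix id Fin.castSucc) * (B.submatrix id Fin.castSucc)ᵀ) i j) := by
  obtain ⟨hB₀, hle, hmul⟩ := partial_decomposition_from_smaller_general
    (M := M) ⟨hB, hMB, Fin.antitone_iff_succ_le.2 hlex⟩
  exact ⟨hB₀.residual_nonneg, hB₀.nonneg,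
    fun j => hB₀.antitone_col (Fin.mk_le_mk.2 j.val.le_succ), hle, hmul⟩
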